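/- For every real p > 1, the function σ_p : [0, π/4] → ℝ, which assigns to θ the ℓ_p length of the chord whose endpoints bound the arc of C_p of μ_p-length e_p with arc-midpoint ρ_p(θ), is increasing on [0, π/4] when p ∈ (1,2) and decreasing on [0, π/4] when p ∈ (2,∞); for p = 2 it is constant. In particular σ_p attains its minimum at θ = 0 when p ∈ (1,2) and at θ = π/4 when p ∈ (2,∞). -/

import Mathlib

open Real MeasureTheory intervalIntegral

/-- The ℓ_p norm of a point of ℝ². -/
noncomputable def lpN (p : ℝ) (z : ℝ × ℝ) : ℝ := (|z.1| ^ p + |z.2| ^ p) ^ (1 / p)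

/-- The ℓ_p unit circle. -/
def Cp (p : ℝ) : Set (ℝ × ℝ) := {z | lpN p z = 1}

/-- The normalization factor `N_p(φ) = (|sin φ|^p + |cos φ|^p)^{1/p}`. -/
noncomputable def Np (p φ : ℝ) : ℝ := (|Real.sin φ| ^ p + |Real.cos φ| ^ p) ^ (1 / p)

/-- The parameterization `ρ_p(φ) = (cos φ, sin φ)/N_p(φ)` of the ℓ_p unit circle. -/
noncomputable def rho (p φ : ℝ) : ℝ × ℝ := (Real.cos φ / Np p φ, Real.sin φ / Np p φ)

/-- The ℓ_p speed `‖ρ_p′(t)‖_p` of the parameterization `ρ_p`. -/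
noncomputable def speed (p t : ℝ) : ℝ := lpN p (deriv (rho p) t)

/-- The ℓ_p arc-length measure of a subset `U` of the ℓ_p unit circle. -/
noncomputable def muP (p : ℝ) (U : Set (ℝ × ℝ)) : ℝ :=
  ∫ t in {t : ℝ | t ∈ Set.Ico 0 (2 * Real.pi) ∧ rho p t ∈ U}, speed p t

/-- `π_p`, half the ℓ_p-circumference of the ℓ_p unit circle. -/
noncomputable def piP (p : ℝ) : ℝ := muP p (Cp p) / 2

/-- `L_p(u)`: the length of the shortest chord of `C_p` whose endpoints cut off a
counterclockwise arc of ℓ_p length `u`. -/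
noncomputable def chordMin (p u : ℝ) : ℝ :=
  sInf {d : ℝ | ∃ a b : ℝ, a ≤ b ∧ b ≤ a + 2 * Real.pi ∧
    (∫ t in a..b, speed p t) = u ∧ d = lpN p (rho p a - rho p b)}

/-!
Let `z` be the counterclockwise unit-speed parameterization of the unit circle of `ℓ_p`. It commutes
with quarter turns, so the chord of the arc of length `π_p + 2δ` with midpoint `z(s)` has length
`‖z(s + δ) + z(s - δ)‖_p`. Write `a = z(s + δ)`, `b = z(s - δ)` and let `D` be the duality map, the
gradient of `‖·‖_p ^ p / p`. As `z'` is the quarter turn of `D z` divided by `‖D z‖_p`, the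
derivative of the `p`-th power of this length with respect to `s` is `p` times
`D b ∧ D(a + b) / ‖D b‖_p - D(a + b) ∧ D a / ‖D a‖_p`. For `0 ≤ s, δ ≤ π_p / 4` the point `a` is
nearer to the diagonal than `b`, and since `D` acts coordinatewise as the odd power of exponent
`p - 1`, concavity (for `p ≤ 2`) or convexity (for `2 ≤ p`) of that power settles the sign of the
difference, comparing numerators and denominators separately.
-/

section Concavity

theorem add_le_add_of_concaveOn {s : Set ℝ} {f : ℝ → ℝ} (hf : ConcaveOn ℝ s f) {a b c d : ℝ}
    (ha : a ∈ s) (hd : d ∈ s) (hab : a ≤ b) (hac : a ≤ c) (h : a + d = b + c) :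
    f a + f d ≤ f b + f c := by
  rcases (by linarith : a ≤ d).eq_or_lt with rfl | had
  · rw [show b = a by linarith, show c = a by linarith]
  have hda : 0 < d - a := sub_pos.2 had
  have hb := hf.2 ha hd (div_nonneg (by linarith : 0 ≤ d - b) hda.le)
    (div_nonneg (by linarith : 0 ≤ d - c) hda.le) (by field_simp; linarith)
  have hc := hf.2 ha hd (div_nonneg (by linarith : 0 ≤ d - c) hda.le)
    (div_nonneg (by linarith : 0 ≤ d - b) hda.le) (by field_simp; linarith)
  obtain rfl : d = b + c - a := by linarith
  simp only [smul_eq_mul] at hb hc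
  rw [show (b + c - a - b) / (b + c - a - a) * a + (b + c - a - c) / (b + c - a - a) * (b + c - a)
    = b by field_simp; ring] at hb
  rw [show (b + c - a - c) / (b + c - a - a) * a + (b + c - a - b) / (b + c - a - a) * (b + c - a)
    = c by field_simp; ring] at hc
  calc f a + f (b + c - a) = _ := by field_simp; ring
    _ ≤ _ := add_le_add hb hc

theorem sub_le_sub_of_odd_of_concaveOn {f : ℝ → ℝ} (hodd : f.Odd)
    (hf : ConcaveOn ℝ (Set.Ici 0) f) {a b c d : ℝ} (hc : 0 ≤ c) (hab : a ≤ b) (hac : a ≤ c)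
    (had : -a ≤ d) (h : d - c = b - a) : f d - f c ≤ f b - f a := by
  have zero : f 0 = 0 := by simpa [self_eq_neg] using hodd 0
  have four {a b c d : ℝ} (ha : 0 ≤ a) (hab : a ≤ b) (hac : a ≤ c) (h : a + d = b + c) :
      f a + f d ≤ f b + f c :=
    add_le_add_of_concaveOn hf ha (show 0 ≤ d by linarith) hab hac h
  rcases le_total 0 a with ha | ha
  · linarith [four ha hab hac (by linarith : a + d = b + c)]
  rcases le_total b 0 with hb | hb
  · linarith [four (neg_nonneg.2 hb) (neg_le_neg hab) (by linarith : -b ≤ c)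
      (by linarith : -b + d = -a + c), hodd a, hodd b]
  · linarith [four le_rfl (neg_nonneg.2 ha) hb (by ring : 0 + (b - a) = -a + b),
      four le_rfl hc (sub_nonneg.2 hab) (by linarith : 0 + d = c + (b - a)), hodd a]

end Concavity

section SignedPower

/-- The odd extension `x ↦ sign x * |x| ^ q` of the power function with exponent `q`. At `x = 0` the
factor `x` makes the value `0` for every `q`. -/
noncomputable def signedRpow (q x : ℝ) : ℝ := |x| ^ (q - 1) * x

variable {q : ℝ}

theorem odd_signedRpow (q : ℝ) : (signedRpow q).Odd := fun x ↦ by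
  simp only [signedRpow, abs_neg, mul_neg]

theorem signedRpow_mul (q x y : ℝ) : signedRpow q (x * y) = signedRpow q x * signedRpow q y := by
  simp only [signedRpow, abs_mul, mul_rpow (abs_nonneg x) (abs_nonneg y)]
  ring

theorem signedRpow_of_nonneg (hq : q ≠ 0) {x : ℝ} (hx : 0 ≤ x) : signedRpow q x = x ^ q := by
  rw [signedRpow, abs_of_nonneg hx, ← rpow_add_one' hx (by simpa using hq), sub_add_cancel]

theorem abs_signedRpow (hq : q ≠ 0) (x : ℝ) : |signedRpow q x| = |x| ^ q := by
  rw [← signedRpow_of_nonneg hq (abs_nonneg x), signedRpow, signedRpow, abs_mul, abs_abs,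
    abs_of_nonneg (rpow_nonneg (abs_nonneg x) _)]

theorem signedRpow_mul_self (hq : 0 < q) (x : ℝ) : signedRpow q x * x = |x| ^ (q + 1) := by
  rw [rpow_add_one' (abs_nonneg x) (by positivity), ← sub_add_cancel q 1,
    rpow_add_one' (abs_nonneg x) (by simpa using hq.ne'), signedRpow, mul_assoc, mul_assoc,
    abs_mul_abs_self, sub_add_cancel]

theorem hasDerivAt_abs_rpow_signedRpow {p : ℝ} (hp : 1 < p) (x : ℝ) :
    HasDerivAt (fun x : ℝ ↦ |x| ^ p) (p * signedRpow (p - 1) x) x := by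
  simpa only [signedRpow, mul_assoc, sub_sub, one_add_one_eq_two] using hasDerivAt_abs_rpow x hp

theorem continuous_signedRpow (hq : 0 < q) : Continuous (signedRpow q) := by
  have hderiv : signedRpow q = fun x ↦ (q + 1)⁻¹ * deriv (fun x : ℝ ↦ |x| ^ (q + 1)) x := by
    funext x
    rw [(hasDerivAt_abs_rpow_signedRpow (by linarith) x).deriv, add_sub_cancel_right,
      inv_mul_cancel_left₀ (by positivity)]
  rw [hderiv]
  exact continuous_const.mul
    ((contDiff_norm_rpow (E := ℝ) (by linarith : 1 < q + 1)).continuous_deriv le_rfl)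

theorem monotone_signedRpow (hq : 0 < q) : Monotone (signedRpow q) :=
  monotone_of_odd_of_monotoneOn_nonneg (odd_signedRpow q) fun x hx y hy hxy ↦ by
    rw [signedRpow_of_nonneg hq.ne' hx, signedRpow_of_nonneg hq.ne' hy]
    exact rpow_le_rpow hx hxy hq.le

theorem concaveOn_signedRpow (hq : 0 < q) (hq1 : q ≤ 1) :
    ConcaveOn ℝ (Set.Ici 0) (signedRpow q) :=
  (concaveOn_rpow hq.le hq1).congr fun _ hx ↦ (signedRpow_of_nonneg hq.ne' hx).symm

theorem convexOn_signedRpow (hq : 1 ≤ q) : ConvexOn ℝ (Set.Ici 0) (signedRpow q) :=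
  (convexOn_rpow hq).congr fun _ hx ↦ (signedRpow_of_nonneg (by positivity) hx).symm

end SignedPower

section LpPlane

/-- The counterclockwise rotation of the plane by a right angle. -/
def quarterTurn (z : ℝ × ℝ) : ℝ × ℝ := (-z.2, z.1)

/-- The area form `u ∧ v` on the plane. -/
def wedge (u v : ℝ × ℝ) : ℝ := u.1 * v.2 - u.2 * v.1

/-- The duality map of the `ℓ_p` plane, i.e. the gradient of `z ↦ ‖z‖_p ^ p / p`. -/
noncomputable def lpDual (p : ℝ) (z : ℝ × ℝ) : ℝ × ℝ :=
  (signedRpow (p - 1) z.1, signedRpow (p - 1) z.2)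

variable {p : ℝ}

theorem wedge_add_left_self (u v : ℝ × ℝ) : wedge (u + v) u = wedge v u := by
  simp only [wedge, Prod.fst_add, Prod.snd_add]
  ring

theorem wedge_add_right_self (u v : ℝ × ℝ) : wedge v (u + v) = wedge v u := by
  simp only [wedge, Prod.fst_add, Prod.snd_add]
  ring

theorem lpN_nonneg (p : ℝ) (z : ℝ × ℝ) : 0 ≤ lpN p z := by
  unfold lpN
  positivity

theorem lpN_rpow (hp : p ≠ 0) (z : ℝ × ℝ) : lpN p z ^ p = |z.1| ^ p + |z.2| ^ p := by
  rw [lpN, one_div, rpow_inv_rpow (by positivity) hp]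

theorem lpN_pos (p : ℝ) {z : ℝ × ℝ} (hz : z ≠ 0) : 0 < lpN p z := by
  refine rpow_pos_of_pos ?_ _
  rcases not_and_or.1 (mt Prod.ext_iff.2 hz) with h | h
  · exact add_pos_of_pos_of_nonneg (rpow_pos_of_pos (abs_pos.2 h) p) (by positivity)
  · exact add_pos_of_nonneg_of_pos (by positivity) (rpow_pos_of_pos (abs_pos.2 h) p)

theorem lpN_smul (hp : p ≠ 0) (c : ℝ) (z : ℝ × ℝ) : lpN p (c • z) = |c| * lpN p z := by
  simp only [lpN, Prod.smul_fst, Prod.smul_snd, smul_eq_mul, abs_mul,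
    mul_rpow (abs_nonneg c) (abs_nonneg _), ← mul_add]
  rw [mul_rpow (by positivity) (by positivity), one_div, rpow_rpow_inv (abs_nonneg c) hp]

theorem lpN_quarterTurn (p : ℝ) (z : ℝ × ℝ) : lpN p (quarterTurn z) = lpN p z := by
  simp only [lpN, quarterTurn, abs_neg, add_comm]

theorem continuous_lpN (hp : 0 ≤ p) : Continuous (lpN p) := by
  unfold lpN
  exact ((continuous_fst.abs.rpow_const fun _ ↦ Or.inr hp).add
    (continuous_snd.abs.rpow_const fun _ ↦ Or.inr hp)).rpow_const fun _ ↦ Or.inr (by positivity)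

theorem hasDerivAt_lpN_rpow (hp : 1 < p) {u : ℝ → ℝ × ℝ} {v : ℝ × ℝ} {t : ℝ}
    (hu : HasDerivAt u v t) : HasDerivAt (fun s ↦ lpN p (u s) ^ p)
      (p * ((lpDual p (u t)).1 * v.1 + (lpDual p (u t)).2 * v.2)) t := by
  simp only [lpN_rpow (by positivity : p ≠ 0)]
  have hfst := (hasDerivAt_abs_rpow_signedRpow hp (u t).1).comp t hu.fst
  have hsnd := (hasDerivAt_abs_rpow_signedRpow hp (u t).2).comp t hu.snd
  exact (hfst.add hsnd).congr_deriv (by simp only [lpDual]; ring)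

theorem lpDual_smul_of_nonneg (hp : p ≠ 1) {c : ℝ} (hc : 0 ≤ c) (z : ℝ × ℝ) :
    lpDual p (c • z) = c ^ (p - 1) • lpDual p z := by
  simp only [lpDual, Prod.smul_fst, Prod.smul_snd, Prod.smul_mk, smul_eq_mul, signedRpow_mul,
    signedRpow_of_nonneg (sub_ne_zero.2 hp) hc]

theorem lpDual_dot_self (hp : 1 < p) (z : ℝ × ℝ) :
    (lpDual p z).1 * z.1 + (lpDual p z).2 * z.2 = lpN p z ^ p := by
  simp only [lpDual, signedRpow_mul_self (sub_pos.2 hp), sub_add_cancel]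
  rw [lpN_rpow (by positivity)]

theorem lpDual_ne_zero (hp : 1 < p) {z : ℝ × ℝ} (hz : z ≠ 0) : lpDual p z ≠ 0 := by
  intro h
  have hdot := lpDual_dot_self hp z
  simp only [h, Prod.fst_zero, Prod.snd_zero, zero_mul, add_zero] at hdot
  exact (rpow_pos_of_pos (lpN_pos p hz) p).ne hdot

theorem continuous_lpDual (hp : 1 < p) : Continuous (lpDual p) :=
  ((continuous_signedRpow (sub_pos.2 hp)).comp continuous_fst).prodMk
    ((continuous_signedRpow (sub_pos.2 hp)).comp continuous_snd)

theorem wedge_lpDual (p : ℝ) (u v : ℝ × ℝ) : wedge (lpDual p u) (lpDual p v) =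
    signedRpow (p - 1) (u.1 * v.2) - signedRpow (p - 1) (u.2 * v.1) := by
  simp only [wedge, lpDual, signedRpow_mul]

theorem wedge_lpDual_nonneg (hp : 1 < p) {u v : ℝ × ℝ} (h : 0 ≤ wedge u v) :
    0 ≤ wedge (lpDual p u) (lpDual p v) := by
  rw [wedge_lpDual]
  exact sub_nonneg.2 (monotone_signedRpow (sub_pos.2 hp) (sub_nonneg.1 h))

theorem lpN_lpDual (hp : 1 < p) (z : ℝ × ℝ) :
    lpN p (lpDual p z) = ((|z.1| ^ p) ^ (p - 1) + (|z.2| ^ p) ^ (p - 1)) ^ (1 / p) := by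
  have hswap (x : ℝ) : |signedRpow (p - 1) x| ^ p = (|x| ^ p) ^ (p - 1) := by
    rw [abs_signedRpow (sub_pos.2 hp).ne', ← rpow_mul (abs_nonneg x), mul_comm,
      rpow_mul (abs_nonneg x)]
  simp only [lpN, lpDual, hswap]

end LpPlane

section UnitVectors

variable {p : ℝ} {a b : ℝ × ℝ}

theorem ne_zero_of_lpN_eq_one (hp : p ≠ 0) {z : ℝ × ℝ} (hz : lpN p z = 1) : z ≠ 0 := by
  rintro rfl
  simp [lpN, hp] at hz

theorem lpN_lpDual_pos (hp : 1 < p) {z : ℝ × ℝ} (hz : lpN p z = 1) : 0 < lpN p (lpDual p z) :=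
  lpN_pos p (lpDual_ne_zero hp (ne_zero_of_lpN_eq_one (by positivity) hz))

theorem rpow_add_rpow_of_lpN_eq_one (hp : p ≠ 0) {z : ℝ × ℝ} (hz : lpN p z = 1) :
    |z.1| ^ p + |z.2| ^ p = 1 := by
  rw [← lpN_rpow hp, hz, one_rpow]

theorem abs_fst_le_abs_fst (hp : 0 < p) (ha : lpN p a = 1) (hb : lpN p b = 1)
    (h : |b.2| ≤ |a.2|) : |a.1| ≤ |b.1| := by
  have ha' := rpow_add_rpow_of_lpN_eq_one hp.ne' ha
  have hb' := rpow_add_rpow_of_lpN_eq_one hp.ne' hb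
  have hpow := rpow_le_rpow (abs_nonneg _) h hp.le
  exact (rpow_le_rpow_iff (abs_nonneg _) (abs_nonneg _) hp).1 (by linarith)

theorem abs_fst_mul_snd_le (hp : 0 < p) (ha : lpN p a = 1) (hb : lpN p b = 1)
    (h₁ : |b.2| ≤ |a.1|) (h₂ : |b.2| ≤ |a.2|) : |b.1 * b.2| ≤ |a.1 * a.2| := by
  have ha' := rpow_add_rpow_of_lpN_eq_one hp.ne' ha
  have hb' := rpow_add_rpow_of_lpN_eq_one hp.ne' hb
  have hpow₁ := rpow_le_rpow (abs_nonneg _) h₁ hp.le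
  have hpow₂ := rpow_le_rpow (abs_nonneg _) h₂ hp.le
  refine (rpow_le_rpow_iff (abs_nonneg _) (abs_nonneg _) hp).1 ?_
  simp only [abs_mul, mul_rpow (abs_nonneg _) (abs_nonneg _)]
  nlinarith

theorem wedge_nonneg_of_abs_snd_le (hp : 0 < p) (ha : lpN p a = 1) (hb : lpN p b = 1)
    (hb₁ : 0 ≤ b.1) (h₁ : |b.2| ≤ a.1) (h₂ : |b.2| ≤ a.2) : 0 ≤ wedge b a := by
  have hfst := abs_fst_le_abs_fst hp ha hb (h₂.trans (le_abs_self _))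
  rw [abs_of_nonneg ((abs_nonneg _).trans h₁), abs_of_nonneg hb₁] at hfst
  have ha₁ := (abs_nonneg _).trans h₁
  refine sub_nonneg.2 ?_
  calc b.2 * a.1 ≤ a.2 * a.1 := by gcongr; exact (le_abs_self _).trans h₂
    _ ≤ a.2 * b.1 := by gcongr; exact (abs_nonneg _).trans h₂
    _ = b.1 * a.2 := mul_comm _ _

/- Both differences have arguments differing by `wedge b a`; those on the left lie
further from the origin, so concavity makes their increment the smaller one. -/
theorem odd_increment_le_of_concaveOn {f : ℝ → ℝ} (hodd : f.Odd) (hf : ConcaveOn ℝ (Set.Ici 0) f)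
    (hp : 0 < p) (ha : lpN p a = 1) (hb : lpN p b = 1)
    (hb₁ : 0 ≤ b.1) (h₁ : |b.2| ≤ a.1) (h₂ : |b.2| ≤ a.2) :
    f ((a + b).1 * a.2) - f ((a + b).2 * a.1) ≤ f (b.1 * (a + b).2) - f (b.2 * (a + b).1) := by
  have ha₁ := (abs_nonneg _).trans h₁
  have ha₂ := (abs_nonneg _).trans h₂
  have h₂' := (abs_le.1 h₂).1
  have hwedge := wedge_nonneg_of_abs_snd_le hp ha hb hb₁ h₁ h₂
  have hmul := abs_fst_mul_snd_le hp ha hb (h₁.trans (le_abs_self _)) (h₂.trans (le_abs_self _))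
  rw [abs_of_nonneg (mul_nonneg ha₁ ha₂)] at hmul
  have hmul' := (le_abs_self _).trans hmul
  simp only [wedge, Prod.fst_add, Prod.snd_add] at hwedge ⊢
  refine sub_le_sub_of_odd_of_concaveOn hodd hf (mul_nonneg (by linarith) ha₁) (by linarith)
    (by linarith) ?_ (by ring)
  linarith [mul_nonneg (by linarith : 0 ≤ a.2 + b.2) (add_nonneg ha₁ hb₁)]

theorem lpN_lpDual_le_of_le_two (hp : 1 < p) (hp₂ : p ≤ 2) (ha : lpN p a = 1) (hb : lpN p b = 1)
    (h₁ : |b.2| ≤ |a.1|) (h₂ : |b.2| ≤ |a.2|) : lpN p (lpDual p b) ≤ lpN p (lpDual p a) := by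
  have hp₀ : 0 < p := by positivity
  have ha' := rpow_add_rpow_of_lpN_eq_one hp₀.ne' ha
  have hb' := rpow_add_rpow_of_lpN_eq_one hp₀.ne' hb
  rw [lpN_lpDual hp, lpN_lpDual hp, add_comm]
  refine rpow_le_rpow (by positivity) ?_ (by positivity)
  exact add_le_add_of_concaveOn (concaveOn_rpow (by linarith) (by linarith))
    (Set.mem_Ici.2 (by positivity)) (Set.mem_Ici.2 (by positivity))
    (rpow_le_rpow (abs_nonneg _) h₁ hp₀.le) (rpow_le_rpow (abs_nonneg _) h₂ hp₀.le) (by linarith)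

theorem lpN_lpDual_le_of_two_le (hp : 2 ≤ p) (ha : lpN p a = 1) (hb : lpN p b = 1)
    (h₁ : |b.2| ≤ |a.1|) (h₂ : |b.2| ≤ |a.2|) : lpN p (lpDual p a) ≤ lpN p (lpDual p b) := by
  have hp₀ : 0 < p := by positivity
  have ha' := rpow_add_rpow_of_lpN_eq_one hp₀.ne' ha
  have hb' := rpow_add_rpow_of_lpN_eq_one hp₀.ne' hb
  rw [lpN_lpDual (by linarith), lpN_lpDual (by linarith), add_comm (_ ^ (p - 1)) ((|b.2| ^ p) ^ _)]
  refine rpow_le_rpow (by positivity) ?_ (by positivity)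
  have := add_le_add_of_concaveOn (convexOn_rpow (by linarith : 1 ≤ p - 1)).neg
    (Set.mem_Ici.2 (by positivity)) (Set.mem_Ici.2 (by positivity))
    (rpow_le_rpow (abs_nonneg _) h₁ hp₀.le) (rpow_le_rpow (abs_nonneg _) h₂ hp₀.le)
    (by linarith : |b.2| ^ p + |b.1| ^ p = |a.1| ^ p + |a.2| ^ p)
  simp only [Pi.neg_apply] at this
  linarith

theorem wedge_lpDual_div_le_of_le_two (hp : 1 < p) (hp₂ : p ≤ 2) (ha : lpN p a = 1)
    (hb : lpN p b = 1) (hb₁ : 0 ≤ b.1) (h₁ : |b.2| ≤ a.1) (h₂ : |b.2| ≤ a.2) :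
    wedge (lpDual p (a + b)) (lpDual p a) / lpN p (lpDual p a) ≤
      wedge (lpDual p b) (lpDual p (a + b)) / lpN p (lpDual p b) := by
  have hq : 0 < p - 1 := sub_pos.2 hp
  have hwedge := wedge_nonneg_of_abs_snd_le (by positivity) ha hb hb₁ h₁ h₂
  refine div_le_div₀ (wedge_lpDual_nonneg hp ?_) ?_
    (lpN_lpDual_pos hp hb)
    (lpN_lpDual_le_of_le_two hp hp₂ ha hb (h₁.trans (le_abs_self _)) (h₂.trans (le_abs_self _)))
  · rwa [wedge_add_right_self]
  · rw [wedge_lpDual, wedge_lpDual]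
    exact odd_increment_le_of_concaveOn (odd_signedRpow _) (concaveOn_signedRpow hq (by linarith))
      (by positivity) ha hb hb₁ h₁ h₂

theorem wedge_lpDual_div_le_of_two_le (hp : 2 ≤ p) (ha : lpN p a = 1)
    (hb : lpN p b = 1) (hb₁ : 0 ≤ b.1) (h₁ : |b.2| ≤ a.1) (h₂ : |b.2| ≤ a.2) :
    wedge (lpDual p b) (lpDual p (a + b)) / lpN p (lpDual p b) ≤
      wedge (lpDual p (a + b)) (lpDual p a) / lpN p (lpDual p a) := by
  have hp₁ : 1 < p := by linarith
  have hwedge := wedge_nonneg_of_abs_snd_le (by positivity) ha hb hb₁ h₁ h₂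
  have hodd : (-signedRpow (p - 1)).Odd := fun x ↦ congrArg Neg.neg (odd_signedRpow _ x)
  have hincr := odd_increment_le_of_concaveOn hodd (convexOn_signedRpow (by linarith)).neg
    (by positivity) ha hb hb₁ h₁ h₂
  refine div_le_div₀ (wedge_lpDual_nonneg hp₁ ?_) ?_
    (lpN_lpDual_pos hp₁ ha)
    (lpN_lpDual_le_of_two_le hp ha hb (h₁.trans (le_abs_self _)) (h₂.trans (le_abs_self _)))
  · rwa [wedge_add_left_self]
  · rw [wedge_lpDual, wedge_lpDual]
    simp only [Pi.neg_apply] at hincr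
    linarith

end UnitVectors

section Parameterization

variable {p : ℝ}

theorem Np_eq_lpN (p t : ℝ) : Np p t = lpN p (cos t, sin t) := by
  rw [Np, lpN, add_comm]

theorem rho_eq_smul (p t : ℝ) : rho p t = (Np p t)⁻¹ • (cos t, sin t) := by
  simp only [rho, Prod.smul_mk, smul_eq_mul, div_eq_inv_mul]

theorem Np_pos (p t : ℝ) : 0 < Np p t := by
  rw [Np_eq_lpN]
  refine lpN_pos p fun h ↦ ?_
  have hcos : cos t = 0 := congrArg Prod.fst h
  have hsin : sin t = 0 := congrArg Prod.snd h
  simpa [hcos, hsin] using sin_sq_add_cos_sq t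

theorem lpN_rho (hp : p ≠ 0) (t : ℝ) : lpN p (rho p t) = 1 := by
  rw [rho_eq_smul, lpN_smul hp, abs_of_pos (inv_pos.2 (Np_pos p t)), ← Np_eq_lpN,
    inv_mul_cancel₀ (Np_pos p t).ne']

theorem Np_add_pi_div_two (p t : ℝ) : Np p (t + π / 2) = Np p t := by
  rw [Np, Np, sin_add_pi_div_two, cos_add_pi_div_two, abs_neg, add_comm]

theorem Np_neg (p t : ℝ) : Np p (-t) = Np p t := by
  rw [Np, Np, sin_neg, cos_neg, abs_neg]

theorem rho_add_pi_div_two (p t : ℝ) : rho p (t + π / 2) = quarterTurn (rho p t) := by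
  simp only [rho, quarterTurn, Np_add_pi_div_two, cos_add_pi_div_two, sin_add_pi_div_two, neg_div]

theorem rho_neg (p t : ℝ) : rho p (-t) = ((rho p t).1, -(rho p t).2) := by
  simp only [rho, Np_neg, cos_neg, sin_neg, neg_div]

theorem lpDual_rho (hp : 1 < p) (t : ℝ) :
    lpDual p (rho p t) = Np p t ^ (1 - p) • lpDual p (cos t, sin t) := by
  rw [rho_eq_smul, lpDual_smul_of_nonneg hp.ne' (inv_pos.2 (Np_pos p t)).le,
    inv_rpow (Np_pos p t).le, ← rpow_neg (Np_pos p t).le, neg_sub]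

theorem Np_eq_lpDual_dot (hp : 1 < p) (t : ℝ) :
    Np p t = (lpDual p (rho p t)).1 * cos t + (lpDual p (rho p t)).2 * sin t := by
  have hdot := lpDual_dot_self hp (rho p t)
  rw [lpN_rho (by positivity), one_rpow] at hdot
  have hN := (Np_pos p t).ne'
  simp only [rho] at hdot ⊢
  field_simp at hdot
  linarith

theorem hasDerivAt_Np (hp : 1 < p) (t : ℝ) : HasDerivAt (Np p)
    ((lpDual p (rho p t)).2 * cos t - (lpDual p (rho p t)).1 * sin t) t := by
  have hu : HasDerivAt (fun s ↦ (cos s, sin s)) (-sin t, cos t) t :=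
    (hasDerivAt_cos t).prodMk (hasDerivAt_sin t)
  have hpos := Np_pos p t
  have hroot := (hasDerivAt_lpN_rpow hp hu).rpow_const (p := 1 / p)
    (Or.inl (rpow_pos_of_pos (Np_eq_lpN p t ▸ hpos) p).ne')
  simp only [← Np_eq_lpN] at hroot
  have hexp : (Np p t ^ p) ^ (1 / p - 1) = Np p t ^ (1 - p) := by
    rw [← rpow_mul hpos.le]
    congr 1
    field_simp
  refine (hroot.congr_deriv ?_).congr_of_eventuallyEq (.of_forall fun s ↦ ?_)
  · rw [hexp, lpDual_rho hp]
    simp only [Prod.smul_fst, Prod.smul_snd, smul_eq_mul]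
    field_simp
    ring
  · simp only [one_div, rpow_rpow_inv (Np_pos p s).le (by positivity : p ≠ 0)]

/- With `N = ⟨ξ, u⟩` and `N' = ⟨ξ, Ju⟩` for `u = (cos, sin)` and `ξ = lpDual p (rho p t)`, the
quotient rule gives `N² (u / N)' = ⟨ξ, u⟩ Ju - ⟨ξ, Ju⟩ u`, which is `Jξ` because `|u| = 1`. -/
theorem hasDerivAt_rho (hp : 1 < p) (t : ℝ) : HasDerivAt (rho p)
    ((Np p t ^ 2)⁻¹ • quarterTurn (lpDual p (rho p t))) t := by
  have hN := Np_eq_lpDual_dot hp t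
  have hcos := (hasDerivAt_cos t).div (hasDerivAt_Np hp t) (Np_pos p t).ne'
  have hsin := (hasDerivAt_sin t).div (hasDerivAt_Np hp t) (Np_pos p t).ne'
  refine (hcos.prodMk hsin).congr_deriv (Prod.ext ?_ ?_)
  · simp only [quarterTurn, Prod.smul_fst, smul_eq_mul, div_eq_inv_mul]
    linear_combination (Np p t ^ 2)⁻¹ *
      (-sin t * hN - (lpDual p (rho p t)).2 * sin_sq_add_cos_sq t)
  · simp only [quarterTurn, Prod.smul_snd, smul_eq_mul, div_eq_inv_mul]
    linear_combination (Np p t ^ 2)⁻¹ *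
      (cos t * hN + (lpDual p (rho p t)).1 * sin_sq_add_cos_sq t)

theorem speed_eq (hp : 1 < p) (t : ℝ) :
    speed p t = (Np p t ^ 2)⁻¹ * lpN p (lpDual p (rho p t)) := by
  rw [speed, (hasDerivAt_rho hp t).deriv, lpN_smul (by positivity), lpN_quarterTurn,
    abs_of_nonneg (by positivity)]

theorem speed_pos (hp : 1 < p) (t : ℝ) : 0 < speed p t := by
  rw [speed_eq hp]
  exact mul_pos (inv_pos.2 (pow_pos (Np_pos p t) 2))
    (lpN_lpDual_pos hp (lpN_rho (by positivity) t))

theorem continuous_rho (hp : 1 < p) : Continuous (rho p) :=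
  continuous_iff_continuousAt.2 fun t ↦ (hasDerivAt_rho hp t).continuousAt

theorem continuous_speed (hp : 1 < p) : Continuous (speed p) := by
  have hNp : Continuous (Np p) :=
    continuous_iff_continuousAt.2 fun t ↦ (hasDerivAt_Np hp t).continuousAt
  rw [funext (speed_eq hp)]
  exact ((hNp.pow 2).inv₀ fun t ↦ (pow_pos (Np_pos p t) 2).ne').mul
    ((continuous_lpN (by positivity)).comp ((continuous_lpDual hp).comp (continuous_rho hp)))

theorem speed_periodic (hp : 1 < p) : Function.Periodic (speed p) (π / 2) := fun t ↦ by
  rw [speed_eq hp, speed_eq hp, Np_add_pi_div_two, rho_add_pi_div_two, lpN_lpDual hp,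
    lpN_lpDual hp, quarterTurn, abs_neg, add_comm]

theorem speed_neg (hp : 1 < p) (t : ℝ) : speed p (-t) = speed p t := by
  rw [speed_eq hp, speed_eq hp, Np_neg, rho_neg, lpN_lpDual hp, lpN_lpDual hp, abs_neg]

end Parameterization

section ArcLength

variable {p : ℝ}

/-- The signed `ℓ_p` length of the arc of the unit circle between the angles `0` and `φ`. -/
noncomputable def arcLength (p φ : ℝ) : ℝ := ∫ t in (0 : ℝ)..φ, speed p t

theorem integral_speed_eq_sub (hp : 1 < p) (a b : ℝ) :
    ∫ t in a..b, speed p t = arcLength p b - arcLength p a :=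
  (integral_interval_sub_left ((continuous_speed hp).intervalIntegrable _ _)
    ((continuous_speed hp).intervalIntegrable _ _)).symm

theorem hasDerivAt_arcLength (hp : 1 < p) (t : ℝ) : HasDerivAt (arcLength p) (speed p t) t :=
  (continuous_speed hp).integral_hasStrictDerivAt 0 t |>.hasDerivAt

theorem strictMono_arcLength (hp : 1 < p) : StrictMono (arcLength p) :=
  strictMono_of_hasDerivAt_pos (hasDerivAt_arcLength hp) (speed_pos hp)

theorem arcLength_zero (p : ℝ) : arcLength p 0 = 0 := integral_same

theorem arcLength_neg (hp : 1 < p) (t : ℝ) : arcLength p (-t) = -arcLength p t := by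
  have hsymm := integral_comp_neg (a := 0) (b := t) (speed p)
  simp only [speed_neg hp, neg_zero] at hsymm
  rw [arcLength, arcLength, hsymm, integral_symm]

theorem surjective_arcLength (hp : 1 < p) : Function.Surjective (arcLength p) := by
  have hint (a b : ℝ) : IntervalIntegrable (speed p) volume a b :=
    (continuous_speed hp).intervalIntegrable a b
  have hcont : Continuous (arcLength p) := continuous_primitive hint 0
  have hper := speed_periodic hp
  exact hcont.surjective
    (hper.tendsto_atTop_intervalIntegral_of_pos' (hint _ _) (speed_pos hp) (by positivity))
    (hper.tendsto_atBot_intervalIntegral_of_pos' (hint _ _) (speed_pos hp) (by positivity))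

theorem piP_eq (hp : 1 < p) : piP p = 2 * arcLength p (π / 2) := by
  have hset : {t : ℝ | t ∈ Set.Ico 0 (2 * π) ∧ rho p t ∈ Cp p} = Set.Ico 0 (2 * π) :=
    Set.ext fun t ↦ and_iff_left (lpN_rho (by positivity) t)
  have hturn := (speed_periodic hp).intervalIntegral_add_zsmul_eq 4 0
    fun _ _ ↦ (continuous_speed hp).intervalIntegrable _ _
  rw [piP, muP, hset, integral_Ico_eq_integral_Ioc, ← integral_of_le (by positivity)]
  simp only [zsmul_eq_mul, Int.cast_ofNat, zero_add] at hturn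
  rw [show 2 * π = 4 * (π / 2) by ring, hturn, arcLength]
  ring

theorem arcLength_pi_div_two (hp : 1 < p) : arcLength p (π / 2) = piP p / 2 := by
  rw [piP_eq hp]
  ring

theorem piP_pos (hp : 1 < p) : 0 < piP p := by
  have hmono := strictMono_arcLength hp (by positivity : 0 < π / 2)
  rw [arcLength_zero, arcLength_pi_div_two hp] at hmono
  linarith

theorem arcLength_add_pi_div_two (hp : 1 < p) (t : ℝ) :
    arcLength p (t + π / 2) = arcLength p t + piP p / 2 := by
  have hperiod := (speed_periodic hp).intervalIntegral_add_eq t 0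
  rw [integral_speed_eq_sub hp, zero_add, ← arcLength, arcLength_pi_div_two hp] at hperiod
  linarith

theorem arcLength_pi_div_four (hp : 1 < p) : arcLength p (π / 4) = piP p / 4 := by
  have hadd := arcLength_add_pi_div_two hp (-(π / 4))
  rw [arcLength_neg hp, show -(π / 4) + π / 2 = π / 4 by ring] at hadd
  linarith

/-- The angle at which the arc of the unit circle that starts at angle `0` has `ℓ_p` length `s`. -/
noncomputable def arcAngle (p : ℝ) : ℝ → ℝ := Function.invFun (arcLength p)

theorem arcAngle_arcLength (hp : 1 < p) (t : ℝ) : arcAngle p (arcLength p t) = t :=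
  Function.leftInverse_invFun (strictMono_arcLength hp).injective t

theorem arcLength_arcAngle (hp : 1 < p) (s : ℝ) : arcLength p (arcAngle p s) = s :=
  Function.rightInverse_invFun (surjective_arcLength hp) s

theorem strictMono_arcAngle (hp : 1 < p) : StrictMono (arcAngle p) := fun s t hst ↦
  (strictMono_arcLength hp).lt_iff_lt.1 (by rwa [arcLength_arcAngle hp, arcLength_arcAngle hp])

theorem hasDerivAt_arcAngle (hp : 1 < p) (s : ℝ) :
    HasDerivAt (arcAngle p) (speed p (arcAngle p s))⁻¹ s := by
  have hcont : Continuous (arcAngle p) := (strictMono_arcAngle hp).monotone.continuous_of_surjective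
    (Function.LeftInverse.surjective (arcAngle_arcLength hp))
  exact (hasDerivAt_arcLength hp _).of_local_left_inverse hcont.continuousAt (speed_pos hp _).ne'
    (.of_forall (arcLength_arcAngle hp))

/-- The point of the unit circle at signed `ℓ_p` arc length `s` counterclockwise from `(1, 0)`,
i.e. the unit-speed parameterization. -/
noncomputable def arcPoint (p s : ℝ) : ℝ × ℝ := rho p (arcAngle p s)

theorem arcPoint_arcLength (hp : 1 < p) (t : ℝ) : arcPoint p (arcLength p t) = rho p t := by
  rw [arcPoint, arcAngle_arcLength hp]

theorem lpN_arcPoint (hp : p ≠ 0) (s : ℝ) : lpN p (arcPoint p s) = 1 := lpN_rho hp _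

theorem arcPoint_neg (hp : 1 < p) (s : ℝ) :
    arcPoint p (-s) = ((arcPoint p s).1, -(arcPoint p s).2) := by
  obtain ⟨t, rfl⟩ := surjective_arcLength hp s
  rw [← arcLength_neg hp, arcPoint_arcLength hp, arcPoint_arcLength hp, rho_neg]

theorem arcPoint_add_piP_div_two (hp : 1 < p) (s : ℝ) :
    arcPoint p (s + piP p / 2) = quarterTurn (arcPoint p s) := by
  obtain ⟨t, rfl⟩ := surjective_arcLength hp s
  rw [← arcLength_add_pi_div_two hp, arcPoint_arcLength hp, arcPoint_arcLength hp,
    rho_add_pi_div_two]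

theorem arcPoint_sub_piP_div_two (hp : 1 < p) (s : ℝ) :
    arcPoint p (s - piP p / 2) = -quarterTurn (arcPoint p s) := by
  have hturn := arcPoint_add_piP_div_two hp (s - piP p / 2)
  rw [sub_add_cancel] at hturn
  simp only [hturn, quarterTurn, Prod.neg_mk, neg_neg, Prod.mk.eta]

theorem arcPoint_piP_div_two_sub (hp : 1 < p) (s : ℝ) :
    arcPoint p (piP p / 2 - s) = (arcPoint p s).swap := by
  rw [show piP p / 2 - s = -s + piP p / 2 by ring, arcPoint_add_piP_div_two hp, arcPoint_neg hp,
    quarterTurn, neg_neg]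
  rfl

theorem hasDerivAt_arcPoint (hp : 1 < p) (s : ℝ) : HasDerivAt (arcPoint p)
    ((lpN p (lpDual p (arcPoint p s)))⁻¹ • quarterTurn (lpDual p (arcPoint p s))) s := by
  refine ((hasDerivAt_rho hp (arcAngle p s)).scomp s (hasDerivAt_arcAngle hp s)).congr_deriv ?_
  rw [smul_smul, speed_eq hp, arcPoint, mul_inv, mul_right_comm,
    inv_mul_cancel₀ (inv_ne_zero (pow_ne_zero 2 (Np_pos p _).ne')), one_mul]

theorem arcPoint_fst_pos (hp : 1 < p) {s : ℝ} (hs : |s| < piP p / 2) : 0 < (arcPoint p s).1 := by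
  obtain ⟨t, rfl⟩ := surjective_arcLength hp s
  rw [abs_lt, ← arcLength_pi_div_two hp, ← arcLength_neg hp,
    (strictMono_arcLength hp).lt_iff_lt, (strictMono_arcLength hp).lt_iff_lt] at hs
  rw [arcPoint_arcLength hp]
  exact div_pos (cos_pos_of_mem_Ioo hs) (Np_pos p t)

theorem arcPoint_zero_snd (hp : 1 < p) : (arcPoint p 0).2 = 0 := by
  rw [show arcPoint p 0 = rho p 0 by rw [← arcPoint_arcLength hp 0, arcLength_zero], rho, sin_zero,
    zero_div]

theorem arcPoint_piP_div_two_snd (hp : 1 < p) : (arcPoint p (piP p / 2)).2 = 1 := by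
  have hp₀ : p ≠ 0 := by positivity
  rw [← arcLength_pi_div_two hp, arcPoint_arcLength hp]
  simp [rho, Np, hp₀]

theorem arcPoint_piP_div_four_snd (hp : 1 < p) : (arcPoint p (piP p / 4)).2 = 2 ^ (-(1 / p)) := by
  have hp₀ : p ≠ 0 := by positivity
  have hpos : 0 < (√2 / 2) := by positivity
  rw [← arcLength_pi_div_four hp, arcPoint_arcLength hp]
  simp only [rho, Np, cos_pi_div_four, sin_pi_div_four, abs_of_pos hpos, ← two_mul]
  rw [mul_rpow two_pos.le (by positivity), one_div, rpow_rpow_inv hpos.le hp₀,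
    rpow_neg two_pos.le]
  field_simp

theorem hasDerivAt_arcPoint_snd (hp : 1 < p) (s : ℝ) : HasDerivAt (fun t ↦ (arcPoint p t).2)
    ((lpN p (lpDual p (arcPoint p s)))⁻¹ * signedRpow (p - 1) (arcPoint p s).1) s :=
  (hasDerivAt_arcPoint hp s).snd

theorem strictMonoOn_arcPoint_snd (hp : 1 < p) :
    StrictMonoOn (fun s ↦ (arcPoint p s).2) (Set.Icc (-(piP p / 2)) (piP p / 2)) := by
  refine strictMonoOn_of_hasDerivWithinAt_pos (convex_Icc _ _)
    (fun s _ ↦ (hasDerivAt_arcPoint_snd hp s).continuousAt.continuousWithinAt)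
    (fun s _ ↦ (hasDerivAt_arcPoint_snd hp s).hasDerivWithinAt) fun s hs ↦ ?_
  rw [interior_Icc] at hs
  have hfst := arcPoint_fst_pos hp (abs_lt.2 hs)
  rw [signedRpow_of_nonneg (sub_pos.2 hp).ne' hfst.le]
  exact mul_pos (inv_pos.2 (lpN_lpDual_pos hp (lpN_arcPoint (by positivity) s)))
    (rpow_pos_of_pos hfst _)

theorem abs_arcPoint_snd_le (hp : 1 < p) {s t : ℝ} (hst : |s| ≤ t) (ht : t ≤ piP p / 2) :
    |(arcPoint p s).2| ≤ (arcPoint p t).2 := by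
  have hle {u : ℝ} (hu : |u| ≤ t) : (arcPoint p u).2 ≤ (arcPoint p t).2 := by
    rw [abs_le] at hu
    exact (strictMonoOn_arcPoint_snd hp).monotoneOn ⟨by linarith, by linarith⟩
      ⟨by linarith, ht⟩ hu.2
  refine abs_le'.2 ⟨hle hst, ?_⟩
  simpa only [arcPoint_neg hp] using hle ((abs_neg s).trans_le hst)

theorem abs_arcPoint_snd_le_fst (hp : 1 < p) {s t : ℝ} (hst : |s| + t ≤ piP p / 2) (ht : 0 ≤ t) :
    |(arcPoint p s).2| ≤ (arcPoint p t).1 := by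
  simpa only [arcPoint_piP_div_two_sub hp, Prod.snd_swap] using
    abs_arcPoint_snd_le hp (le_sub_iff_add_le.2 hst) (sub_le_self _ ht)

end ArcLength

section GraphSpeed

variable {p : ℝ}

/-- The `ℓ_p` speed `(1 + |dx/dy| ^ p) ^ (1/p)` of the first-quadrant arc of the unit circle when
it is parameterized by its second coordinate `y = z`. -/
noncomputable def graphSpeed (p z : ℝ) : ℝ :=
  (z ^ (p ^ 2 - p) * (1 - z ^ p) ^ (1 - p) + 1) ^ (1 / p)

theorem graphSpeed_mul_signedRpow (hp : 1 < p) {z : ℝ × ℝ} (hz : lpN p z = 1) (hz₁ : 0 < z.1)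
    (hz₂ : 0 ≤ z.2) : graphSpeed p z.2 * signedRpow (p - 1) z.1 = lpN p (lpDual p z) := by
  have hp₀ : 0 < p := by positivity
  have hunit := rpow_add_rpow_of_lpN_eq_one hp₀.ne' hz
  rw [abs_of_pos hz₁, abs_of_nonneg hz₂] at hunit
  have hxp : 0 < (z.1 ^ p) ^ (p - 1) := by positivity
  have hroot : ((z.1 ^ p) ^ (p - 1)) ^ (1 / p) = z.1 ^ (p - 1) := by
    rw [← rpow_mul (by positivity), ← rpow_mul hz₁.le]
    congr 1
    field_simp
  rw [lpN_lpDual hp, abs_of_pos hz₁, abs_of_nonneg hz₂, graphSpeed,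
    signedRpow_of_nonneg (sub_pos.2 hp).ne' hz₁.le, show 1 - z.2 ^ p = z.1 ^ p by linarith,
    show p ^ 2 - p = p * (p - 1) by ring, rpow_mul hz₂, ← neg_sub p 1, rpow_neg (by positivity),
    ← hroot, ← mul_rpow (by positivity) hxp.le]
  congr 1
  field_simp
  ring

theorem integral_graphSpeed (hp : 1 < p) {a b : ℝ} (ha : 0 ≤ a) (hab : a ≤ b) (hb : b ≤ piP p / 2) :
    ∫ z in (arcPoint p a).2..(arcPoint p b).2, graphSpeed p z = b - a := by
  have hmem {s : ℝ} (hs : s ∈ Set.Ioo a b) : 0 < (arcPoint p s).1 ∧ 0 ≤ (arcPoint p s).2 := by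
    have hs₀ : |s| = s := abs_of_pos (ha.trans_lt hs.1)
    exact ⟨arcPoint_fst_pos hp (hs₀.trans_lt (hs.2.trans_le hb)),
      (abs_nonneg _).trans (abs_arcPoint_snd_le hp hs₀.le (hs.2.le.trans hb))⟩
  have hunit (s : ℝ) := lpN_arcPoint (by positivity : p ≠ 0) s
  have hspeed (s : ℝ) := lpN_lpDual_pos hp (hunit s)
  rw [← integral_comp_mul_deriv_of_deriv_nonneg (f := fun s ↦ (arcPoint p s).2)
    (fun s _ ↦ (hasDerivAt_arcPoint_snd hp s).continuousAt.continuousWithinAt)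
    (fun s _ ↦ hasDerivAt_arcPoint_snd hp s)]
  · refine (integral_congr_Ioo_of_le hab fun s hs ↦ ?_).trans (integral_one (a := a) (b := b))
    rw [Function.comp_apply, mul_left_comm,
      graphSpeed_mul_signedRpow hp (hunit s) (hmem hs).1 (hmem hs).2,
      inv_mul_cancel₀ (hspeed s).ne']
  · intro s hs
    rw [min_eq_left hab, max_eq_right hab] at hs
    have hfst := (hmem hs).1.le
    rw [signedRpow_of_nonneg (sub_pos.2 hp).ne' hfst]
    exact mul_nonneg (inv_pos.2 (hspeed s)).le (rpow_nonneg hfst _)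

theorem integral_graphSpeed_mem_Icc (hp : 1 < p) {a b r : ℝ} (ha : 0 ≤ a) (hab : a ≤ b)
    (hb : b ≤ piP p / 2) (hr : r ∈ Set.Icc (arcPoint p a).2 (arcPoint p b).2) :
    ∫ z in (arcPoint p a).2..r, graphSpeed p z ∈ Set.Icc 0 (b - a) := by
  have hcont : ContinuousOn (fun s ↦ (arcPoint p s).2) (Set.Icc a b) := fun s _ ↦
    (hasDerivAt_arcPoint_snd hp s).continuousAt.continuousWithinAt
  obtain ⟨c, ⟨hac, hcb⟩, rfl⟩ := intermediate_value_Icc hab hcont hr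
  rw [integral_graphSpeed hp ha hac (hcb.trans hb)]
  exact ⟨sub_nonneg.2 hac, sub_le_sub_right hcb a⟩

theorem integral_graphSpeed_zero_mem_Icc (hp : 1 < p) {c : ℝ} (hc : 1 ≤ c) :
    ∫ z in 0..(c + 1) ^ (-(1 / p)), graphSpeed p z ∈ Set.Icc 0 (piP p / 4) := by
  have hpi := piP_pos hp
  have hmem := integral_graphSpeed_mem_Icc hp (r := (c + 1) ^ (-(1 / p))) le_rfl
    (by positivity : 0 ≤ piP p / 4) (by linarith)
  rw [arcPoint_zero_snd hp, arcPoint_piP_div_four_snd hp, sub_zero] at hmem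
  refine hmem ⟨by positivity, rpow_le_rpow_of_nonpos two_pos (by linarith) ?_⟩
  exact neg_nonpos.2 (by positivity)

theorem integral_graphSpeed_diagonal_mem_Icc (hp : 1 < p) {c : ℝ} (hc₀ : 0 ≤ c) (hc₁ : c ≤ 1) :
    ∫ z in (2 : ℝ) ^ (-(1 / p))..(c + 1) ^ (-(1 / p)), graphSpeed p z ∈
      Set.Icc 0 (piP p / 4) := by
  have hpi := piP_pos hp
  have hexp : -(1 / p) ≤ 0 := neg_nonpos.2 (by positivity)
  have hmem := integral_graphSpeed_mem_Icc hp (r := (c + 1) ^ (-(1 / p)))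
    (by positivity : 0 ≤ piP p / 4) (by linarith : piP p / 4 ≤ piP p / 2) le_rfl
  rw [arcPoint_piP_div_two_snd hp, arcPoint_piP_div_four_snd hp,
    show piP p / 2 - piP p / 4 = piP p / 4 by ring] at hmem
  exact hmem ⟨rpow_le_rpow_of_nonpos (by positivity) (by linarith) hexp,
    rpow_le_one_of_one_le_of_nonpos (by linarith) hexp⟩

theorem worstCaseArcLength_mem_Icc (hp : 1 < p) {e : ℝ}
    (he₁ : p ≤ 2 → e = piP p +
      2 * ∫ z in (0 : ℝ)..(((2 : ℝ) ^ p - 1) ^ (1 / (p - 1)) + 1) ^ (-(1 / p)), graphSpeed p z)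
    (he₂ : 2 < p → ∃ w ∈ Set.Ioo (0 : ℝ) 1, w ^ p + 1 = 2 * (1 - w) ^ p ∧ e = piP p +
      2 * ∫ z in (2 : ℝ) ^ (-(1 / p))..(w ^ (p / (p - 1)) + 1) ^ (-(1 / p)), graphSpeed p z) :
    e ∈ Set.Icc (piP p / 2) (3 * piP p / 2) := by
  have hpi := piP_pos hp
  have hp₁ : 0 < p - 1 := sub_pos.2 hp
  suffices ∃ δ ∈ Set.Icc 0 (piP p / 4), e = piP p + 2 * δ by
    obtain ⟨δ, ⟨hδ₀, hδ₁⟩, rfl⟩ := this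
    constructor <;> linarith
  rcases le_or_gt p 2 with hp₂ | hp₂
  · refine ⟨_, integral_graphSpeed_zero_mem_Icc hp (one_le_rpow ?_ (one_div_pos.2 hp₁).le), he₁ hp₂⟩
    linarith [self_le_rpow_of_one_le one_le_two hp.le]
  · obtain ⟨w, hw, -, he⟩ := he₂ hp₂
    exact ⟨_, integral_graphSpeed_diagonal_mem_Icc hp (rpow_pos_of_pos hw.1 _).le
      (rpow_le_one hw.1.le hw.2.le (div_pos (by positivity) hp₁).le), he⟩

end GraphSpeed

section Chord

variable {p : ℝ}

/-- The `ℓ_p` length of the chord of the arc of the unit circle of length `e` whose midpoint is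
`arcPoint p s`; as a function of the angle of the midpoint this is `σ_p`. -/
noncomputable def arcChord (p e s : ℝ) : ℝ :=
  lpN p (arcPoint p (s + e / 2) - arcPoint p (s - e / 2))

theorem lpN_rho_sub_rho_eq_arcChord (hp : 1 < p) {e θ α β : ℝ}
    (hβ : ∫ t in (θ - β)..θ, speed p t = e / 2) (hα : ∫ t in θ..(θ + α), speed p t = e / 2) :
    lpN p (rho p (θ + α) - rho p (θ - β)) = arcChord p e (arcLength p θ) := by
  rw [integral_speed_eq_sub hp] at hα hβ
  rw [arcChord, ← hα, add_sub_cancel, hα, ← hβ, sub_sub_cancel, arcPoint_arcLength hp,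
    arcPoint_arcLength hp]

/- A quarter turn carries the endpoints at arc distance `e / 2` from the midpoint to one point at
distance `δ = |e - piP p| / 2` and the antipode of the other. -/
theorem arcChord_eq_lpN_add (hp : 1 < p) (e s : ℝ) : arcChord p e s =
    lpN p (arcPoint p (s + |e - piP p| / 2) + arcPoint p (s - |e - piP p| / 2)) := by
  have hturn : arcChord p e s =
      lpN p (arcPoint p (s + (e - piP p) / 2) + arcPoint p (s - (e - piP p) / 2)) := by
    rw [← lpN_quarterTurn p (_ + _), arcChord,
      show s + e / 2 = s + (e - piP p) / 2 + piP p / 2 by ring,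
      show s - e / 2 = s - (e - piP p) / 2 - piP p / 2 by ring,
      arcPoint_add_piP_div_two hp, arcPoint_sub_piP_div_two hp]
    congr 1
    simp only [quarterTurn, sub_neg_eq_add, Prod.mk_add_mk, Prod.fst_add, Prod.snd_add, neg_add]
  rcases abs_choice (e - piP p) with h | h
  · rw [h, hturn]
  · rw [h, hturn, neg_div, ← sub_eq_add_neg, sub_neg_eq_add, add_comm]

theorem hasDerivAt_lpN_arcPoint_add_rpow (hp : 1 < p) (δ s : ℝ) :
    let a := arcPoint p (s + δ)
    let b := arcPoint p (s - δ)
    HasDerivAt (fun t ↦ lpN p (arcPoint p (t + δ) + arcPoint p (t - δ)) ^ p)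
      (p * (wedge (lpDual p b) (lpDual p (a + b)) / lpN p (lpDual p b) -
        wedge (lpDual p (a + b)) (lpDual p a) / lpN p (lpDual p a))) s := by
  intro a b
  have hu := ((hasDerivAt_arcPoint hp (s + δ)).comp_add_const s δ).add
    ((hasDerivAt_arcPoint hp (s - δ)).comp_sub_const s δ)
  refine (hasDerivAt_lpN_rpow hp hu).congr_deriv ?_
  simp only [wedge, quarterTurn, Pi.add_apply, Prod.fst_add, Prod.snd_add, Prod.smul_mk,
    smul_eq_mul, a, b]
  ring

theorem arcPoint_pair_bounds (hp : 1 < p) {s δ : ℝ} (hs : s ∈ Set.Icc 0 (piP p / 4))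
    (hδ : δ ∈ Set.Icc 0 (piP p / 4)) :
    0 ≤ (arcPoint p (s - δ)).1 ∧ |(arcPoint p (s - δ)).2| ≤ (arcPoint p (s + δ)).1 ∧
      |(arcPoint p (s - δ)).2| ≤ (arcPoint p (s + δ)).2 := by
  have hpi := piP_pos hp
  obtain ⟨hs₀, hs₁⟩ := hs
  obtain ⟨hδ₀, hδ₁⟩ := hδ
  have hdiff : |s - δ| ≤ s + δ := abs_le.2 ⟨by linarith, by linarith⟩
  have hquarter : |s - δ| + (s + δ) ≤ piP p / 2 := by
    rcases abs_cases (s - δ) with ⟨h, -⟩ | ⟨h, -⟩ <;> linarith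
  refine ⟨(arcPoint_fst_pos hp ?_).le, abs_arcPoint_snd_le_fst hp hquarter (by linarith),
    abs_arcPoint_snd_le hp hdiff (by linarith)⟩
  exact abs_lt.2 ⟨by linarith, by linarith⟩

theorem abs_sub_piP_div_two_mem_Icc {e : ℝ} (he : e ∈ Set.Icc (piP p / 2) (3 * piP p / 2)) :
    |e - piP p| / 2 ∈ Set.Icc 0 (piP p / 4) := by
  obtain ⟨h₁, h₂⟩ := he
  have habs : |e - piP p| ≤ piP p / 2 := abs_le.2 ⟨by linarith, by linarith⟩
  exact ⟨by positivity, by linarith⟩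

theorem monotoneOn_arcChord (hp : 1 < p) (hp₂ : p ≤ 2) {e : ℝ}
    (he : e ∈ Set.Icc (piP p / 2) (3 * piP p / 2)) :
    MonotoneOn (arcChord p e) (Set.Icc 0 (piP p / 4)) := by
  have hδ := abs_sub_piP_div_two_mem_Icc he
  have hderiv := hasDerivAt_lpN_arcPoint_add_rpow hp (|e - piP p| / 2)
  have hpow : MonotoneOn (fun s ↦ arcChord p e s ^ p) (Set.Icc 0 (piP p / 4)) := by
    simp only [arcChord_eq_lpN_add hp]
    refine monotoneOn_of_hasDerivWithinAt_nonneg (convex_Icc _ _)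
      (fun s _ ↦ (hderiv s).continuousAt.continuousWithinAt)
      (fun s _ ↦ (hderiv s).hasDerivWithinAt) fun s hs ↦ ?_
    obtain ⟨h₀, h₁, h₂⟩ := arcPoint_pair_bounds hp (interior_subset hs) hδ
    refine mul_nonneg (by positivity) (sub_nonneg.2 ?_)
    exact wedge_lpDual_div_le_of_le_two hp hp₂ (lpN_arcPoint (by positivity) _)
      (lpN_arcPoint (by positivity) _) h₀ h₁ h₂
  exact fun s hs t ht hst ↦ (rpow_le_rpow_iff (lpN_nonneg p _) (lpN_nonneg p _)
    (by positivity)).1 (hpow hs ht hst)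

theorem antitoneOn_arcChord (hp : 2 ≤ p) {e : ℝ}
    (he : e ∈ Set.Icc (piP p / 2) (3 * piP p / 2)) :
    AntitoneOn (arcChord p e) (Set.Icc 0 (piP p / 4)) := by
  have hp₁ : 1 < p := by linarith
  have hδ := abs_sub_piP_div_two_mem_Icc he
  have hderiv := hasDerivAt_lpN_arcPoint_add_rpow hp₁ (|e - piP p| / 2)
  have hpow : AntitoneOn (fun s ↦ arcChord p e s ^ p) (Set.Icc 0 (piP p / 4)) := by
    simp only [arcChord_eq_lpN_add hp₁]
    refine antitoneOn_of_hasDerivWithinAt_nonpos (convex_Icc _ _)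
      (fun s _ ↦ (hderiv s).continuousAt.continuousWithinAt)
      (fun s _ ↦ (hderiv s).hasDerivWithinAt) fun s hs ↦ ?_
    obtain ⟨h₀, h₁, h₂⟩ := arcPoint_pair_bounds hp₁ (interior_subset hs) hδ
    refine mul_nonpos_of_nonneg_of_nonpos (by positivity) (sub_nonpos.2 ?_)
    exact wedge_lpDual_div_le_of_two_le hp (lpN_arcPoint (by positivity) _)
      (lpN_arcPoint (by positivity) _) h₀ h₁ h₂
  exact fun s hs t ht hst ↦ (rpow_le_rpow_iff (lpN_nonneg p _) (lpN_nonneg p _)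
    (by positivity)).1 (hpow hs ht hst)

end Chord

theorem stmt_17_general {p e : ℝ} (hp : 1 < p) (he : e ∈ Set.Icc (piP p / 2) (3 * piP p / 2))
    {θ θ' α β α' β' : ℝ} (hθ : 0 ≤ θ) (hle : θ ≤ θ') (hθ' : θ' ≤ π / 4)
    (hβ : ∫ t in (θ - β)..θ, speed p t = e / 2) (hα : ∫ t in θ..(θ + α), speed p t = e / 2)
    (hβ' : ∫ t in (θ' - β')..θ', speed p t = e / 2)
    (hα' : ∫ t in θ'..(θ' + α'), speed p t = e / 2) :
    (p ≤ 2 → lpN p (rho p (θ + α) - rho p (θ - β)) ≤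
      lpN p (rho p (θ' + α') - rho p (θ' - β'))) ∧
    (2 ≤ p → lpN p (rho p (θ' + α') - rho p (θ' - β')) ≤
      lpN p (rho p (θ + α) - rho p (θ - β))) := by
  have hmono := (strictMono_arcLength hp).monotone
  have hmem : ∀ φ ∈ Set.Icc 0 (π / 4), arcLength p φ ∈ Set.Icc 0 (piP p / 4) := fun φ hφ ↦
    ⟨arcLength_zero p ▸ hmono hφ.1, arcLength_pi_div_four hp ▸ hmono hφ.2⟩
  have hs := hmem θ ⟨hθ, hle.trans hθ'⟩
  have hs' := hmem θ' ⟨hθ.trans hle, hθ'⟩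
  rw [lpN_rho_sub_rho_eq_arcChord hp hβ hα, lpN_rho_sub_rho_eq_arcChord hp hβ' hα']
  exact ⟨fun hp₂ ↦ monotoneOn_arcChord hp hp₂ he hs hs' (hmono hle),
    fun hp₂ ↦ antitoneOn_arcChord hp₂ he hs hs' (hmono hle)⟩

/-- For every `p > 1`, the chord-length function `σ_p(θ)` of the arc of `C_p` of
ℓ_p length `e_p` with arc-midpoint `ρ_p(θ)` is increasing on `[0, π/4]` when
`p ∈ (1,2)`, decreasing on `[0, π/4]` when `p ∈ (2,∞)`, and constant when `p = 2`.
Here an arc with midpoint `ρ_p(θ)` and endpoints `ρ_p(θ−β)`, `ρ_p(θ+α)` has both of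
its halves of ℓ_p length `e_p/2`, and `e_p` is as in the worst case of the optimal
algorithm (piecewise in `p`, via the root `w_p` of `w^p + 1 = 2(1−w)^p` for `p > 2`). -/
theorem stmt_17 (p : ℝ) (hp : 1 < p) (ep : ℝ)
    (hep1 : p ≤ 2 → ep = piP p
      + 2 * ∫ z in (0 : ℝ)..((((2 : ℝ) ^ p - 1) ^ (1 / (p - 1)) + 1) ^ (-(1 / p))),
          (z ^ (p ^ 2 - p) * (1 - z ^ p) ^ (1 - p) + 1) ^ (1 / p))
    (hep2 : 2 < p → ∃ w ∈ Set.Ioo (0 : ℝ) 1, w ^ p + 1 = 2 * (1 - w) ^ p ∧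
      ep = piP p
        + 2 * ∫ z in ((2 : ℝ) ^ (-(1 / p)))..((w ^ (p / (p - 1)) + 1) ^ (-(1 / p))),
            (z ^ (p ^ 2 - p) * (1 - z ^ p) ^ (1 - p) + 1) ^ (1 / p)) :
    ∀ θ ∈ Set.Icc (0 : ℝ) (Real.pi / 4), ∀ θ' ∈ Set.Icc (0 : ℝ) (Real.pi / 4), θ ≤ θ' →
      ∀ α β α' β' : ℝ, 0 ≤ α → 0 ≤ β → 0 ≤ α' → 0 ≤ β' →
        (∫ t in (θ - β)..θ, speed p t) = ep / 2 →
        (∫ t in θ..(θ + α), speed p t) = ep / 2 →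
        (∫ t in (θ' - β')..θ', speed p t) = ep / 2 →
        (∫ t in θ'..(θ' + α'), speed p t) = ep / 2 →
        (p < 2 → lpN p (rho p (θ + α) - rho p (θ - β))
            ≤ lpN p (rho p (θ' + α') - rho p (θ' - β'))) ∧
        (2 < p → lpN p (rho p (θ' + α') - rho p (θ' - β'))
            ≤ lpN p (rho p (θ + α) - rho p (θ - β))) ∧
        (p = 2 → lpN p (rho p (θ + α) - rho p (θ - β))
            = lpN p (rho p (θ' + α') - rho p (θ' - β'))) := by
  intro θ hθ θ' hθ' hle α β α' β' _ _ _ _ hβ hα hβ' hα'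
  obtain ⟨h₁, h₂⟩ := stmt_17_general hp (worstCaseArcLength_mem_Icc hp hep1 hep2) hθ.1 hle hθ'.2
    hβ hα hβ' hα'
  exact ⟨fun h ↦ h₁ h.le, fun h ↦ h₂ h.le, fun h ↦ (h₁ h.le).antisymm (h₂ h.ge)⟩
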